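/- Quadrature formula for the soliton mass: let ω > 0 and let φ : ℝ → ℝ be twice continuously differentiable, even, positive, strictly decreasing on [0,∞) with φ′(x) < 0 for x > 0, satisfying φ″ − ωφ + φ⁷/(1+φ⁴) = 0 and φ(x), φ′(x) → 0 as x → ∞. Then the quantity ω ρ² − (1/2)[ρ⁴ − log(1+ρ⁴)] is strictly positive for ρ ∈ (0, φ(0)), and the mass of φ is given by the convergent improper integral ∫_ℝ φ(x)² dx = 2 ∫₀^{φ(0)} ρ² · ( ω ρ² − (1/2)[ ρ⁴ − log(1 + ρ⁴) ] )^{−1/2} dρ. -/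

import Mathlib

open MeasureTheory

/-!
Multiplying the profile equation by `2φ′` shows that `φ′² − V(φ)` is constant on the half-line,
where `V(ρ) = ωρ² − (1/2)[ρ⁴ − log(1+ρ⁴)]`. Since `φ` is monotone with a limit, `φ′` is integrable,
so the constant is zero and `φ′² = V(φ)`. As `φ` maps `(0,∞)` bijectively onto `(0, φ(0))`,
substituting `ρ = φ(x)`, `dx = −dρ / √V(ρ)` turns the mass into the quadrature. It converges because
`ρ² = O(√V(ρ))` at `0`, which makes `φ²` dominated at infinity by the integrable function `|φ′|`.
-/

open Set Filter Topology Asymptotics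

theorem limit_lt_of_strictAntiOn_Ici {α β : Type*} [LinearOrder α] [NoMaxOrder α] [LinearOrder β]
    [TopologicalSpace β] [OrderClosedTopology β] {f : α → β} {a : α} {L : β}
    (hanti : StrictAntiOn f (Ici a)) (hlim : Tendsto f atTop (𝓝 L)) {x : α} (hx : x ∈ Ici a) :
    L < f x := by
  have : Nonempty α := ⟨a⟩
  obtain ⟨y, hxy⟩ := exists_gt x
  have hy : y ∈ Ici a := le_trans hx hxy.le
  have limit_le : L ≤ f y := le_of_tendsto hlim <| (eventually_ge_atTop y).mono fun z hyz =>
    hanti.antitoneOn hy (le_trans hy hyz) hyz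
  exact limit_le.trans_lt (hanti hx hy hxy)

theorem image_Ioi_eq_Ioo_of_strictAntiOn_Ici {α β : Type*}
    [ConditionallyCompleteLinearOrder α] [TopologicalSpace α] [OrderTopology α] [DenselyOrdered α]
    [NoMaxOrder α] [LinearOrder β] [TopologicalSpace β] [OrderClosedTopology β]
    {f : α → β} {a : α} {L : β} (hcont : ContinuousOn f (Ici a)) (hanti : StrictAntiOn f (Ici a))
    (hlim : Tendsto f atTop (𝓝 L)) : f '' Ioi a = Ioo L (f a) := by
  apply Subset.antisymm
  · rintro _ ⟨x, hx, rfl⟩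
    have hx' : x ∈ Ici a := Ioi_subset_Ici_self hx
    exact ⟨limit_lt_of_strictAntiOn_Ici hanti hlim hx', hanti self_mem_Ici hx' hx⟩
  · rintro ρ ⟨hLρ, hρ⟩
    have : Nonempty α := ⟨a⟩
    obtain ⟨b, hbρ, hab⟩ := ((hlim.eventually_lt_const hLρ).and (eventually_ge_atTop a)).exists
    obtain ⟨x, hx, rfl⟩ := intermediate_value_Ioo' hab (hcont.mono Icc_subset_Ici_self) ⟨hbρ, hρ⟩
    exact ⟨x, hx.1, rfl⟩

theorem eq_zero_of_integrableOn_Ioi_of_tendsto_sq {f : ℝ → ℝ} {a c : ℝ}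
    (hf : IntegrableOn f (Ioi a)) (hlim : Tendsto (fun x => f x ^ 2) atTop (𝓝 c)) : c = 0 := by
  have abs_integrable : IntegrableAtFilter (fun x => |f x|) atTop :=
    ⟨Ioi a, Ioi_mem_atTop a, hf.abs⟩
  have abs_tendsto : Tendsto (fun x => |f x|) atTop (𝓝 (√c)) := by
    simpa only [Real.sqrt_sq_eq_abs] using hlim.sqrt
  have volume_eq_top : ∀ s ∈ (atTop : Filter ℝ), volume s = ⊤ := fun s hs => by
    obtain ⟨b, hb⟩ := mem_atTop_sets.1 hs
    exact measure_mono_top hb Real.volume_Ici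
  have c_nonneg : 0 ≤ c := ge_of_tendsto' hlim fun x => sq_nonneg (f x)
  exact (Real.sqrt_eq_zero c_nonneg).1 (abs_integrable.eq_zero_of_tendsto volume_eq_top abs_tendsto)

theorem integrableOn_Ioi_of_isBigO {E G : Type*} [NormedAddCommGroup E] [NormedAddCommGroup G]
    {f : ℝ → E} {h : ℝ → G} {a : ℝ} (hf : ContinuousOn f (Ici a)) (hfh : f =O[atTop] h)
    (hh : IntegrableOn h (Ioi a)) : IntegrableOn f (Ioi a) :=
  ((hf.locallyIntegrableOn measurableSet_Ici).integrableOn_of_isBigO_atTop hfh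
    ⟨Ioi a, Ioi_mem_atTop a, hh⟩).mono_set Ioi_subset_Ici_self

theorem integral_eq_two_mul_integral_Ioi_of_even {f : ℝ → ℝ} (heven : f.Even) :
    ∫ x, f x = 2 * ∫ x in Ioi 0, f x := by
  have comp_abs : ∀ x, f |x| = f x := fun x => by
    rcases abs_choice x with h | h <;> simp only [h, heven x]
  simpa only [comp_abs] using integral_comp_abs (f := f)

theorem abs_mul_mul_sq_rpow_neg_half {p : ℝ} (hp : p ≠ 0) (w : ℝ) :
    |p| * (w * (p ^ 2) ^ (-(1 / 2) : ℝ)) = w := by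
  rw [Real.rpow_neg (sq_nonneg p), ← Real.sqrt_eq_rpow, Real.sqrt_sq_eq_abs]
  field_simp

section FirstIntegral

variable {φ φ' V F : ℝ → ℝ} {a L : ℝ}

theorem exists_sq_sub_potential_eq_const {g : ℝ → ℝ} (hφ : ∀ x ∈ Ioi a, HasDerivAt φ (φ' x) x)
    (hφ' : ∀ x ∈ Ioi a, HasDerivAt φ' (g (φ x)) x)
    (hV : ∀ x ∈ Ioi a, HasDerivAt V (2 * g (φ x)) (φ x)) :
    ∃ E, ∀ x ∈ Ioi a, φ' x ^ 2 - V (φ x) = E := by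
  have energy_deriv : ∀ x ∈ Ioi a, HasDerivAt (fun x => φ' x ^ 2 - V (φ x)) 0 x := fun x hx => by
    refine (((hφ' x hx).pow 2).sub ((hV x hx).comp x (hφ x hx))).congr_deriv ?_
    ring
  exact isOpen_Ioi.exists_is_const_of_deriv_eq_zero isPreconnected_Ioi
    (fun x hx => (energy_deriv x hx).differentiableAt.differentiableWithinAt)
    fun x hx => (energy_deriv x hx).deriv

theorem sq_eq_potential_of_integrableOn {g : ℝ → ℝ} (hφ : ∀ x ∈ Ioi a, HasDerivAt φ (φ' x) x)
    (hφ' : ∀ x ∈ Ioi a, HasDerivAt φ' (g (φ x)) x)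
    (hV : ∀ x ∈ Ioi a, HasDerivAt V (2 * g (φ x)) (φ x)) (hint : IntegrableOn φ' (Ioi a))
    (hlim : Tendsto (fun x => V (φ x)) atTop (𝓝 0)) : ∀ x ∈ Ioi a, φ' x ^ 2 = V (φ x) := by
  obtain ⟨E, hE⟩ := exists_sq_sub_potential_eq_const hφ hφ' hV
  have sq_tendsto : Tendsto (fun x => φ' x ^ 2) atTop (𝓝 (0 + E)) :=
    (hlim.add_const E).congr' <| (eventually_gt_atTop a).mono fun x hx => by linarith [hE x hx]
  have E_eq_zero : E = 0 := by
    simpa only [zero_add] using eq_zero_of_integrableOn_Ioi_of_tendsto_sq hint sq_tendsto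
  exact fun x hx => by linarith [hE x hx]

section ChangeOfVariables

variable {s : Set ℝ} (hs : MeasurableSet s) (hφ : ∀ x ∈ s, HasDerivWithinAt φ (φ' x) s x)
  (hinj : InjOn φ s) (hne : ∀ x ∈ s, φ' x ≠ 0) (henergy : ∀ x ∈ s, φ' x ^ 2 = V (φ x))

include hne henergy in
theorem eqOn_abs_smul_comp_mul_rpow_neg_half :
    EqOn (fun x => |φ' x| • (F (φ x) * V (φ x) ^ (-(1 / 2) : ℝ))) (fun x => F (φ x)) s :=
  fun x hx => by
    simpa only [smul_eq_mul, henergy x hx] using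
      abs_mul_mul_sq_rpow_neg_half (hne x hx) (F (φ x))

include hs hφ hinj hne henergy

theorem integrableOn_image_mul_rpow_neg_half_iff :
    IntegrableOn (fun ρ => F ρ * V ρ ^ (-(1 / 2) : ℝ)) (φ '' s) ↔
      IntegrableOn (fun x => F (φ x)) s := by
  rw [integrableOn_image_iff_integrableOn_abs_deriv_smul hs hφ hinj,
    integrableOn_congr_fun (eqOn_abs_smul_comp_mul_rpow_neg_half hne henergy) hs]

theorem setIntegral_image_mul_rpow_neg_half :
    ∫ ρ in φ '' s, F ρ * V ρ ^ (-(1 / 2) : ℝ) = ∫ x in s, F (φ x) := by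
  rw [integral_image_eq_integral_abs_deriv_smul hs hφ hinj,
    setIntegral_congr_fun hs (eqOn_abs_smul_comp_mul_rpow_neg_half hne henergy)]

end ChangeOfVariables

theorem isBigO_comp_of_sq_eq_potential (henergy : ∀ x ∈ Ioi a, φ' x ^ 2 = V (φ x))
    (hlim : Tendsto φ atTop (𝓝[>] L)) (hFV : F =O[𝓝[>] L] fun ρ => √(V ρ)) :
    (fun x => F (φ x)) =O[atTop] φ' := by
  have sqrt_eq_abs : (fun x => √(V (φ x))) =ᶠ[atTop] fun x => |φ' x| :=
    (eventually_gt_atTop a).mono fun x hx => by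
      simp only [← henergy x hx, Real.sqrt_sq_eq_abs]
  exact ((hFV.comp_tendsto hlim).trans_eventuallyEq sqrt_eq_abs).of_abs_right

section HalfLine

theorem strictAntiOn_Ici_of_hasDerivAt_neg (hcont : ContinuousOn φ (Ici a))
    (hφ : ∀ x ∈ Ioi a, HasDerivAt φ (φ' x) x) (hneg : ∀ x ∈ Ioi a, φ' x < 0) :
    StrictAntiOn φ (Ici a) :=
  strictAntiOn_of_hasDerivWithinAt_neg (convex_Ici a) hcont
    (by simpa only [interior_Ici] using fun x hx => (hφ x hx).hasDerivWithinAt)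
    (by simpa only [interior_Ici] using hneg)

variable (hcont : ContinuousOn φ (Ici a)) (hφ : ∀ x ∈ Ioi a, HasDerivAt φ (φ' x) x)
  (hneg : ∀ x ∈ Ioi a, φ' x < 0) (hlim : Tendsto φ atTop (𝓝 L))
  (henergy : ∀ x ∈ Ioi a, φ' x ^ 2 = V (φ x))

include hcont hφ hneg hlim

theorem image_Ioi_eq_Ioo_of_hasDerivAt_neg : φ '' Ioi a = Ioo L (φ a) :=
  image_Ioi_eq_Ioo_of_strictAntiOn_Ici hcont (strictAntiOn_Ici_of_hasDerivAt_neg hcont hφ hneg) hlim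

theorem limit_lt_of_hasDerivAt_neg {x : ℝ} (hx : x ∈ Ici a) : L < φ x :=
  limit_lt_of_strictAntiOn_Ici (strictAntiOn_Ici_of_hasDerivAt_neg hcont hφ hneg) hlim hx

include henergy

theorem potential_pos {ρ : ℝ} (hρ : ρ ∈ Ioo L (φ a)) : 0 < V ρ := by
  rw [← image_Ioi_eq_Ioo_of_hasDerivAt_neg hcont hφ hneg hlim] at hρ
  obtain ⟨x, hx, rfl⟩ := hρ
  exact henergy x hx ▸ sq_pos_of_neg (hneg x hx)

theorem intervalIntegrable_mul_rpow_neg_half_iff :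
    IntervalIntegrable (fun ρ => F ρ * V ρ ^ (-(1 / 2) : ℝ)) volume L (φ a) ↔
      IntegrableOn (fun x => F (φ x)) (Ioi a) := by
  have hle : L ≤ φ a := (limit_lt_of_hasDerivAt_neg hcont hφ hneg hlim self_mem_Ici).le
  rw [intervalIntegrable_iff_integrableOn_Ioo_of_le hle,
    ← image_Ioi_eq_Ioo_of_hasDerivAt_neg hcont hφ hneg hlim]
  exact integrableOn_image_mul_rpow_neg_half_iff measurableSet_Ioi
    (fun x hx => (hφ x hx).hasDerivWithinAt)
    ((strictAntiOn_Ici_of_hasDerivAt_neg hcont hφ hneg).injOn.mono Ioi_subset_Ici_self)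
    (fun x hx => (hneg x hx).ne) henergy

theorem intervalIntegral_mul_rpow_neg_half_eq :
    ∫ ρ in L..φ a, F ρ * V ρ ^ (-(1 / 2) : ℝ) = ∫ x in Ioi a, F (φ x) := by
  have hle : L ≤ φ a := (limit_lt_of_hasDerivAt_neg hcont hφ hneg hlim self_mem_Ici).le
  rw [intervalIntegral.integral_of_le hle, integral_Ioc_eq_integral_Ioo,
    ← image_Ioi_eq_Ioo_of_hasDerivAt_neg hcont hφ hneg hlim]
  exact setIntegral_image_mul_rpow_neg_half measurableSet_Ioi
    (fun x hx => (hφ x hx).hasDerivWithinAt)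
    ((strictAntiOn_Ici_of_hasDerivAt_neg hcont hφ hneg).injOn.mono Ioi_subset_Ici_self)
    (fun x hx => (hneg x hx).ne) henergy

end HalfLine

end FirstIntegral

theorem soliton_mass_quadrature_general {φ φ' V g F : ℝ → ℝ} {L : ℝ} (heven : φ.Even)
    (hcont : ContinuousOn φ (Ici 0)) (hφ : ∀ x ∈ Ioi 0, HasDerivAt φ (φ' x) x)
    (hneg : ∀ x ∈ Ioi 0, φ' x < 0) (hODE : ∀ x ∈ Ioi 0, HasDerivAt φ' (g (φ x)) x)
    (hlim : Tendsto φ atTop (𝓝 L)) (hV : ∀ ρ ∈ Ioi L, HasDerivAt V (2 * g ρ) ρ)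
    (hVL : Tendsto V (𝓝[>] L) (𝓝 0)) (hF : ContinuousOn F (Ioi L))
    (hFV : F =O[𝓝[>] L] fun ρ => √(V ρ)) :
    (∀ ρ ∈ Ioo L (φ 0), 0 < V ρ) ∧
    IntervalIntegrable (fun ρ => F ρ * V ρ ^ (-(1 / 2) : ℝ)) volume L (φ 0) ∧
    ∫ x, F (φ x) = 2 * ∫ ρ in L..φ 0, F ρ * V ρ ^ (-(1 / 2) : ℝ) := by
  have hgt : ∀ x ∈ Ici 0, L < φ x := fun x => limit_lt_of_hasDerivAt_neg hcont hφ hneg hlim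
  have hlim_right : Tendsto φ atTop (𝓝[>] L) :=
    tendsto_nhdsWithin_iff.2 ⟨hlim, (eventually_ge_atTop 0).mono hgt⟩
  have hφ'_int : IntegrableOn φ' (Ioi 0) :=
    integrableOn_Ioi_deriv_of_nonpos (hcont 0 self_mem_Ici) hφ (fun x hx => (hneg x hx).le) hlim
  have henergy : ∀ x ∈ Ioi 0, φ' x ^ 2 = V (φ x) :=
    sq_eq_potential_of_integrableOn hφ hODE (fun x hx => hV _ (hgt x (Ioi_subset_Ici_self hx)))
      hφ'_int (hVL.comp hlim_right)
  have hFφ_int : IntegrableOn (fun x => F (φ x)) (Ioi 0) :=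
    integrableOn_Ioi_of_isBigO (hF.comp hcont hgt)
      (isBigO_comp_of_sq_eq_potential henergy hlim_right hFV) hφ'_int
  refine ⟨fun ρ => potential_pos hcont hφ hneg hlim henergy,
    (intervalIntegrable_mul_rpow_neg_half_iff hcont hφ hneg hlim henergy).2 hFφ_int, ?_⟩
  rw [intervalIntegral_mul_rpow_neg_half_eq hcont hφ hneg hlim henergy]
  exact integral_eq_two_mul_integral_Ioi_of_even fun x => congrArg F (heven x)

/-- The quantity `V(ρ)` of the first integral `φ′² = V(φ)` for the saturated nonlinearity: twice
the primitive of `ωρ − ρ⁷/(1+ρ⁴)` vanishing at `0`. -/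
noncomputable def saturatedPotential (ω ρ : ℝ) : ℝ :=
  ω * ρ ^ 2 - (1 / 2) * (ρ ^ 4 - Real.log (1 + ρ ^ 4))

theorem hasDerivAt_saturatedPotential (ω ρ : ℝ) :
    HasDerivAt (saturatedPotential ω) (2 * (ω * ρ - ρ ^ 7 / (1 + ρ ^ 4))) ρ := by
  have one_add_pos : 0 < 1 + ρ ^ 4 := by positivity
  have log_deriv := ((hasDerivAt_pow 4 ρ).const_add 1).log one_add_pos.ne'
  refine (((hasDerivAt_pow 2 ρ).const_mul ω).sub
    (((hasDerivAt_pow 4 ρ).sub log_deriv).const_mul (1 / 2 : ℝ))).congr_deriv ?_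
  push_cast
  field_simp
  ring

theorem tendsto_saturatedPotential_nhdsGT_zero (ω : ℝ) :
    Tendsto (saturatedPotential ω) (𝓝[>] 0) (𝓝 0) := by
  have apply_zero : saturatedPotential ω 0 = 0 := by simp [saturatedPotential]
  simpa only [apply_zero] using
    (hasDerivAt_saturatedPotential ω 0).continuousAt.tendsto.mono_left nhdsWithin_le_nhds

theorem pow_four_le_two_mul_saturatedPotential {ω ρ : ℝ} (hρ : ρ ^ 2 ≤ ω) :
    ρ ^ 4 ≤ 2 * saturatedPotential ω ρ := by
  have log_nonneg : 0 ≤ Real.log (1 + ρ ^ 4) :=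
    Real.log_nonneg (le_add_of_nonneg_right (by positivity))
  calc ρ ^ 4 = 2 * (ρ ^ 2 * ρ ^ 2) - ρ ^ 4 := by ring
    _ ≤ 2 * (ω * ρ ^ 2) - ρ ^ 4 := by gcongr
    _ ≤ 2 * saturatedPotential ω ρ := by
      unfold saturatedPotential
      linarith

theorem isBigO_sq_sqrt_saturatedPotential {ω : ℝ} (hω : 0 < ω) :
    (fun ρ : ℝ => ρ ^ 2) =O[𝓝 0] fun ρ => √(saturatedPotential ω ρ) := by
  have sq_lt : ∀ᶠ ρ : ℝ in 𝓝 0, ρ ^ 2 < ω :=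
    (continuous_pow 2).continuousAt.eventually_lt_const (by simpa using hω)
  refine IsBigO.of_bound (√2) (sq_lt.mono fun ρ hρ => ?_)
  rw [Real.norm_of_nonneg (sq_nonneg ρ), Real.norm_of_nonneg (Real.sqrt_nonneg _),
    ← Real.sqrt_mul zero_le_two]
  refine Real.le_sqrt_of_sq_le ?_
  calc (ρ ^ 2) ^ 2 = ρ ^ 4 := by ring
    _ ≤ 2 * saturatedPotential ω ρ := pow_four_le_two_mul_saturatedPotential hρ.le

/-- Quadrature formula for the soliton mass: for an even, positive soliton profile
`φ`, strictly decreasing on `[0,∞)` with `φ′ < 0` on `(0,∞)`, solving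
`φ″ − ωφ + φ⁷/(1+φ⁴) = 0` with `φ, φ′ → 0` at `∞`, the quantity
`ωρ² − (1/2)[ρ⁴ − log(1+ρ⁴)]` is positive on `(0, φ(0))` and
`∫ φ² dx = 2∫₀^{φ(0)} ρ² (ωρ² − (1/2)[ρ⁴ − log(1+ρ⁴)])^{−1/2} dρ`, a convergent improper
integral. -/
theorem soliton_mass_quadrature (ω : ℝ) (hω : 0 < ω) (φ : ℝ → ℝ)
    (hφ : ContDiff ℝ 2 φ)
    (heven : ∀ x : ℝ, φ (-x) = φ x)
    (hpos : ∀ x : ℝ, 0 < φ x)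
    (hanti : StrictAntiOn φ (Set.Ici 0))
    (hderiv_neg : ∀ x : ℝ, 0 < x → deriv φ x < 0)
    (hODE : ∀ x : ℝ, deriv (deriv φ) x - ω * φ x + (φ x) ^ 7 / (1 + (φ x) ^ 4) = 0)
    (hlim : Filter.Tendsto φ Filter.atTop (nhds 0))
    (hlim' : Filter.Tendsto (deriv φ) Filter.atTop (nhds 0)) :
    (∀ ρ ∈ Set.Ioo 0 (φ 0),
      0 < ω * ρ ^ 2 - (1 / 2) * (ρ ^ 4 - Real.log (1 + ρ ^ 4))) ∧
    IntervalIntegrable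
      (fun ρ : ℝ => ρ ^ 2 * (ω * ρ ^ 2 - (1 / 2) * (ρ ^ 4 - Real.log (1 + ρ ^ 4))) ^ (-(1 / 2) : ℝ))
      volume 0 (φ 0) ∧
    ∫ x : ℝ, (φ x) ^ 2
      = 2 * ∫ ρ in (0 : ℝ)..(φ 0),
          ρ ^ 2 * (ω * ρ ^ 2 - (1 / 2) * (ρ ^ 4 - Real.log (1 + ρ ^ 4))) ^ (-(1 / 2) : ℝ) := by
  exact soliton_mass_quadrature_general heven hφ.continuous.continuousOn
    (fun x _ => (hφ.differentiable two_ne_zero x).hasDerivAt) hderiv_neg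
    (fun x _ => (hφ.deriv'.differentiable one_ne_zero x).hasDerivAt.congr_deriv
      (by linarith [hODE x]))
    hlim (fun ρ _ => hasDerivAt_saturatedPotential ω ρ) (tendsto_saturatedPotential_nhdsGT_zero ω)
    (continuous_pow 2).continuousOn
    ((isBigO_sq_sqrt_saturatedPotential hω).mono nhdsWithin_le_nhds)
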